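/- arXiv:2106.12977 — 2 statements merged into one kernel-verified Lean document; each statement's English description precedes it below -/
import Mathlib

section
/- Every stable matching survives the iterated deletion of unattractive alternatives: for every stable matching μ of the matching problem and every worker w, the pair (w, μ(w)) belongs to the normal form S*. -/
/-- `(w,f)` blocks the matching `μ`: `f ≻_w μ(w)` and `w ≻_f μ⁻¹(f)`.
`prefW w f f'` means worker `w` strictly prefers firm `f` to firm `f'`;
`prefF f w w'` means firm `f` strictly prefers worker `w` to worker `w'`. -/
def Blocks {W F : Type*} (prefW : W → F → F → Prop) (prefF : F → W → W → Prop)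
    (μ : W ≃ F) (w : W) (f : F) : Prop :=
  prefW w f (μ w) ∧ prefF f w (μ.symm f)

/-- A matching is stable if no pair blocks it. -/
def IsStableMatching {W F : Type*} (prefW : W → F → F → Prop)
    (prefF : F → W → W → Prop) (μ : W ≃ F) : Prop :=
  ∀ w f, ¬ Blocks prefW prefF μ w f

/-- A pair `(w,f)` is unattractive in `S`. -/
def Unattractive {W F : Type*} (prefW : W → F → F → Prop) (prefF : F → W → W → Prop)
    (S : Set (W × F)) (w : W) (f : F) : Prop :=
  (∃ f', (w, f') ∈ S ∧ prefW w f' f ∧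
      ∀ w', w' ≠ w → (w', f') ∈ S → prefF f' w w') ∨
  (∃ w', (w', f) ∈ S ∧ prefF f w' w ∧
      ∀ f'', f'' ≠ f → (w', f'') ∈ S → prefW w' f f'')

/-- `delta S` is `S` with all pairs unattractive in `S` removed. -/
def delta {W F : Type*} (prefW : W → F → F → Prop) (prefF : F → W → W → Prop)
    (S : Set (W × F)) : Set (W × F) :=
  {p ∈ S | ¬ Unattractive prefW prefF S p.1 p.2}

/-- The normal form: the fixed point of `delta` reached by iterating from `W × F`.
Since `delta S ⊆ S` and `W × F` is finite, `Fintype.card (W × F)` iterations suffice. -/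
def NormalForm (W F : Type*) [Fintype W] [Fintype F]
    (prefW : W → F → F → Prop) (prefF : F → W → W → Prop) : Set (W × F) :=
  (delta prefW prefF)^[Fintype.card (W × F)] Set.univ

/-- `μ` is `S`-stable: `S`-admissible and no pair of `S` blocks it within `S`. -/
def SStable {W F : Type*} (prefW : W → F → F → Prop) (prefF : F → W → W → Prop)
    (S : Set (W × F)) (μ : W ≃ F) : Prop :=
  (∀ w, (w, μ w) ∈ S) ∧
  ∀ w f, (w, f) ∈ S → ¬ (prefW w f (μ w) ∧ prefF f w (μ.symm f))

/-- Arcs of the matching digraph `D(S)`: from `(w,f)` to `(w,f')` whenever `f' ≻_w f`,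
and from `(w,f)` to `(w',f)` whenever `w' ≻_f w`. -/
def Arc {W F : Type*} (prefW : W → F → F → Prop) (prefF : F → W → W → Prop)
    (S : Set (W × F)) (p q : W × F) : Prop :=
  p ∈ S ∧ q ∈ S ∧
    ((p.1 = q.1 ∧ prefW p.1 q.2 p.2) ∨ (p.2 = q.2 ∧ prefF p.2 q.1 p.1))

/-- `D(S)` contains a directed cycle: distinct vertices `c 0, …, c (n-1)` with `n ≥ 1`,
`c n = c 0`, and an arc from each vertex to the next. -/
def HasDirectedCycle {W F : Type*} (prefW : W → F → F → Prop)
    (prefF : F → W → W → Prop) (S : Set (W × F)) : Prop :=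
  ∃ (n : ℕ) (c : Fin (n + 1) → W × F), 0 < n ∧
    Function.Injective (fun i : Fin n => c i.castSucc) ∧
    c (Fin.last n) = c 0 ∧
    ∀ i : Fin n, Arc prefW prefF S (c i.castSucc) (c i.succ)

/-- The preference lists possess a cycle: there are `k ≥ 2`, distinct workers
`w_1, …, w_k` and distinct firms `f_1, …, f_k` (indexed by `ZMod k`) with
`f_{j+1} ≻_{w_j} f_j` and `w_j ≻_{f_j} w_{j-1}` for all `j`, indices modulo `k`. -/
def PrefCycle {W F : Type*} (prefW : W → F → F → Prop)
    (prefF : F → W → W → Prop) : Prop :=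
  ∃ k : ℕ, 2 ≤ k ∧ ∃ (ws : ZMod k → W) (fs : ZMod k → F),
    Function.Injective ws ∧ Function.Injective fs ∧
    ∀ j : ZMod k, prefW (ws j) (fs (j + 1)) (fs j) ∧ prefF (fs j) (ws j) (ws (j - 1))

/-!
The invariant is stability relative to the current set `S` of alternatives. If `(w, μ w)` is
unattractive in `S` because of `(w, f)`, then `w` is the favourite of `f` in `S`; in particular `f`
prefers `w` to `μ⁻¹(f)`, so `(w, f)` blocks `μ` within `S`. The case of `(w', μ w)` is dual. Hence a
round of deletion keeps every pair of `μ`, and it cannot create a blocking pair.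
-/

section

variable {W F : Type*} {prefW : W → F → F → Prop} {prefF : F → W → W → Prop}
  {S T : Set (W × F)} {μ : W ≃ F}

theorem sStable_univ_iff :
    SStable prefW prefF Set.univ μ ↔ IsStableMatching prefW prefF μ := by
  simp only [SStable, IsStableMatching, Blocks, Set.mem_univ, implies_true, forall_const,
    true_and]

theorem delta_subset : delta prefW prefF S ⊆ S :=
  Set.sep_subset _ _

namespace SStable

theorem of_subset (hμ : SStable prefW prefF S μ) (hTS : T ⊆ S) (hT : ∀ w, (w, μ w) ∈ T) :
    SStable prefW prefF T μ :=
  ⟨hT, fun w f hwf => hμ.2 w f (hTS hwf)⟩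

variable [∀ w, Std.Irrefl (prefW w)] [∀ f, Std.Irrefl (prefF f)]

theorem not_unattractive (hμ : SStable prefW prefF S μ) (w : W) :
    ¬ Unattractive prefW prefF S w (μ w) := by
  obtain ⟨hadm, hblock⟩ := hμ
  rintro (⟨f, hwf, hpref, hfav⟩ | ⟨w', hwf, hpref, hfav⟩)
  · have hne : μ.symm f ≠ w := by
      rintro rfl
      rw [μ.apply_symm_apply] at hpref
      exact irrefl f hpref
    have hmem : (μ.symm f, f) ∈ S := by simpa only [μ.apply_symm_apply] using hadm (μ.symm f)
    exact hblock w f hwf ⟨hpref, hfav _ hne hmem⟩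
  · have hne : μ w' ≠ μ w := μ.injective.ne (ne_of_irrefl hpref)
    have hprefμ : prefF (μ w) w' (μ.symm (μ w)) := by rwa [μ.symm_apply_apply]
    exact hblock w' (μ w) hwf ⟨hfav _ hne (hadm w'), hprefμ⟩

theorem sStable_delta (hμ : SStable prefW prefF S μ) :
    SStable prefW prefF (delta prefW prefF S) μ :=
  hμ.of_subset delta_subset fun w => ⟨hμ.1 w, hμ.not_unattractive w⟩

end SStable

theorem stable_subset_normalForm_general [∀ w, Std.Irrefl (prefW w)]
    [∀ f, Std.Irrefl (prefF f)] (hμ : SStable prefW prefF S μ) (n : ℕ) :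
    SStable prefW prefF ((delta prefW prefF)^[n] S) μ :=
  Function.Iterate.rec (SStable prefW prefF · μ) hμ (fun _ => SStable.sStable_delta) n

end

/-- Every stable matching survives the iterated deletion of unattractive alternatives. -/
theorem stable_subset_normalForm {W F : Type*} [Fintype W] [Fintype F] [Nonempty W]
    (hcard : Fintype.card W = Fintype.card F)
    (prefW : W → F → F → Prop) (prefF : F → W → W → Prop)
    (hW : ∀ w, IsStrictTotalOrder F (prefW w))
    (hF : ∀ f, IsStrictTotalOrder W (prefF f))
    (μ : W ≃ F) (hμ : IsStableMatching prefW prefF μ) (w : W) :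
    (w, μ w) ∈ NormalForm W F prefW prefF :=
  (stable_subset_normalForm_general (sStable_univ_iff.2 hμ) _).1 w
end

section
/- If the normal form S* contains two distinct pairs that share the same worker or share the same firm, then the matching problem has at least two distinct stable matchings. -/
/-!
A pair unattractive in `S` stays unattractive in `Δ(S)`: the favourite pair that dominates it can
only be removed because of a favourite pair that dominates it even more strongly. Hence `S*`
consists of exactly the pairs that are not unattractive in `S*`. In such a set a worker without
partners would leave every firm the favourite of some other worker, which `|W| = |F|` excludes; so
every worker has a favourite firm, distinct workers have distinct ones, and matching every worker
with its favourite is stable; symmetrically for firms. If these two stable matchings coincide, every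
matched pair is a pair of mutual favourites, which makes all other pairs unattractive, so `S*` is
the matching itself and no two of its pairs share a worker or a firm.
-/

/-- `b` is the favourite partner of `a` in `S`. The pairs of `S` list the chooser first, so the
favourite worker of a firm is a favourite in `Prod.swap ⁻¹' S`. -/
def IsFavourite {A B : Type*} (pref : A → B → B → Prop) (S : Set (A × B)) (a : A) (b : B) :
    Prop :=
  (a, b) ∈ S ∧ ∀ c, c ≠ b → (a, c) ∈ S → pref a b c

/-- `S` is normal if it consists of exactly the pairs that are not unattractive in `S` itself. This
is the property of the normal form from which the favourite matchings are built. Unlike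
`delta S = S`, it also says that every pair missing from `S` is unattractive in `S`. -/
def IsNormalSet {A B : Type*} (prefA : A → B → B → Prop) (prefB : B → A → A → Prop)
    (S : Set (A × B)) : Prop :=
  ∀ a b, (a, b) ∈ S ↔ ¬ Unattractive prefA prefB S a b

theorem isWellOrder_of_finite {α : Type*} [Finite α] (r : α → α → Prop)
    [IsStrictTotalOrder α r] : IsWellOrder α r where
  wf := Finite.wellFounded_of_trans_of_irrefl r

theorem isFixedPt_iterate_of_ncard_le {α : Type*} {g : Set α → Set α} (hg : ∀ s, g s ⊆ s)
    {s : Set α} (hs : s.Finite) {n : ℕ} (hn : s.ncard ≤ n) :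
    Function.IsFixedPt g (g^[n] s) := by
  induction n generalizing s with
  | zero =>
    obtain rfl : s = ∅ := (Set.ncard_eq_zero hs).1 (Nat.le_zero.1 hn)
    exact Set.subset_empty_iff.1 (hg ∅)
  | succ n ih =>
    by_cases hfix : g s = s
    · rwa [Function.iterate_fixed hfix]
    · have hlt : (g s).ncard < s.ncard := Set.ncard_lt_ncard ((hg s).ssubset_of_ne hfix) hs
      exact ih (hs.subset (hg s)) (by lia)

section

variable {A B : Type*} {prefA : A → B → B → Prop} {prefB : B → A → A → Prop} {S : Set (A × B)}
  {a : A} {b : B}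

theorem IsStableMatching.symm {μ : A ≃ B} (h : IsStableMatching prefA prefB μ) :
    IsStableMatching prefB prefA μ.symm :=
  fun b a hblock => h a b hblock.symm

theorem exists_isFavourite_of_mem [∀ a, IsWellOrder B (prefA a)] (hab : (a, b) ∈ S) :
    ∃ c, IsFavourite prefA S a c := by
  obtain ⟨c, hc, hmin⟩ :=
    (IsWellFounded.wf (r := prefA a)).has_min {c | (a, c) ∈ S} ⟨b, hab⟩
  exact ⟨c, hc, fun d hne hd =>
    (trichotomous_of (prefA a) c d).resolve_right (not_or.2 ⟨hne.symm, hmin d hd⟩)⟩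

theorem IsFavourite.notMem_of_pref [∀ a, Std.Asymm (prefA a)] (h : IsFavourite prefA S a b)
    {c : B} (hc : prefA a c b) : (a, c) ∉ S := fun hmem =>
  asymm_of (prefA a) hc (h.2 c (ne_of_irrefl hc) hmem)

theorem IsFavourite.unique [∀ a, Std.Asymm (prefA a)] {c : B} (hb : IsFavourite prefA S a b)
    (hc : IsFavourite prefA S a c) : b = c := by
  by_contra hne
  exact hc.notMem_of_pref (hb.2 c (Ne.symm hne) hc.1) hb.1

theorem unattractive_iff :
    Unattractive prefA prefB S a b ↔
      (∃ b', prefA a b' b ∧ IsFavourite prefB (Prod.swap ⁻¹' S) b' a) ∨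
      (∃ a', prefB b a' a ∧ IsFavourite prefA S a' b) :=
  or_congr (exists_congr fun _ => and_left_comm) (exists_congr fun _ => and_left_comm)

theorem unattractive_swap :
    Unattractive prefB prefA (Prod.swap ⁻¹' S) b a ↔ Unattractive prefA prefB S a b :=
  or_comm

theorem delta_swap :
    delta prefB prefA (Prod.swap ⁻¹' S) = Prod.swap ⁻¹' delta prefA prefB S :=
  Set.ext fun _ => and_congr_right fun _ => not_congr unattractive_swap

theorem IsFavourite.isFavourite_delta [∀ a, Std.Asymm (prefA a)] (h : IsFavourite prefA S a b)
    (hbest : ∀ a', IsFavourite prefA S a' b → ¬ prefB b a' a) :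
    IsFavourite prefA (delta prefA prefB S) a b := by
  refine ⟨⟨h.1, fun hun => ?_⟩, fun c hne hc => h.2 c hne hc.1⟩
  rcases unattractive_iff.1 hun with ⟨b', hpref, hfav⟩ | ⟨a', hpref, hfav⟩
  · exact h.notMem_of_pref hpref hfav.1
  · exact hbest a' hfav hpref

theorem IsFavourite.exists_isFavourite_delta_of_pref [∀ a, Std.Asymm (prefA a)]
    [∀ b, IsWellFounded A (prefB b)] [∀ b, IsTrans A (prefB b)] (h : IsFavourite prefA S a b)
    {a₀ : A} (hpref : prefB b a a₀) :
    ∃ a', prefB b a' a₀ ∧ IsFavourite prefA (delta prefA prefB S) a' b := by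
  obtain ⟨m, ⟨hm, hmpref⟩, hmin⟩ := (IsWellFounded.wf (r := prefB b)).has_min
    {x | IsFavourite prefA S x b ∧ prefB b x a₀} ⟨a, h, hpref⟩
  refine ⟨m, hmpref, hm.isFavourite_delta fun x hx hxm => ?_⟩
  exact hmin x ⟨hx, trans_of (prefB b) hxm hmpref⟩ hxm

theorem unattractive_delta [∀ a, IsWellFounded B (prefA a)] [∀ a, IsTrans B (prefA a)]
    [∀ b, IsWellFounded A (prefB b)] [∀ b, IsTrans A (prefB b)]
    (h : Unattractive prefA prefB S a b) :
    Unattractive prefA prefB (delta prefA prefB S) a b := by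
  rw [unattractive_iff, ← delta_swap]
  rcases unattractive_iff.1 h with ⟨b', hpref, hfav⟩ | ⟨a', hpref, hfav⟩
  · exact Or.inl (hfav.exists_isFavourite_delta_of_pref hpref)
  · exact Or.inr (hfav.exists_isFavourite_delta_of_pref hpref)

theorem unattractive_of_notMem_iterate_delta [∀ a, IsWellFounded B (prefA a)]
    [∀ a, IsTrans B (prefA a)] [∀ b, IsWellFounded A (prefB b)] [∀ b, IsTrans A (prefB b)]
    (n : ℕ) (h : (a, b) ∉ (delta prefA prefB)^[n] Set.univ) :
    Unattractive prefA prefB ((delta prefA prefB)^[n] Set.univ) a b := by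
  induction n with
  | zero => exact absurd (Set.mem_univ _) h
  | succ n ih =>
    rw [Function.iterate_succ_apply'] at h ⊢
    apply unattractive_delta
    by_contra hattr
    exact h ⟨not_imp_comm.1 ih hattr, hattr⟩

theorem delta_normalForm [Fintype A] [Fintype B] :
    delta prefA prefB (NormalForm A B prefA prefB) = NormalForm A B prefA prefB :=
  isFixedPt_iterate_of_ncard_le (fun _ => Set.sep_subset _ _) Set.finite_univ
    (by rw [Set.ncard_univ, Nat.card_eq_fintype_card])

theorem isNormalSet_normalForm [Fintype A] [Fintype B] [∀ a, IsStrictOrder B (prefA a)]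
    [∀ b, IsStrictOrder A (prefB b)] :
    IsNormalSet prefA prefB (NormalForm A B prefA prefB) := by
  have : ∀ a, IsWellFounded B (prefA a) := fun a => ⟨Finite.wellFounded_of_trans_of_irrefl _⟩
  have : ∀ b, IsWellFounded A (prefB b) := fun b => ⟨Finite.wellFounded_of_trans_of_irrefl _⟩
  refine fun a b => ⟨fun h => ?_, not_imp_comm.1 (unattractive_of_notMem_iterate_delta _)⟩
  rw [← delta_normalForm] at h
  exact h.2

namespace IsNormalSet

theorem swap (hS : IsNormalSet prefA prefB S) : IsNormalSet prefB prefA (Prod.swap ⁻¹' S) :=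
  fun b a => (hS a b).trans (not_congr unattractive_swap.symm)

theorem exists_isFavourite [Finite A] [∀ a, IsWellOrder B (prefA a)]
    (hS : IsNormalSet prefA prefB S) (hcard : Nat.card A ≤ Nat.card B) (a : A) :
    ∃ b, IsFavourite prefA S a b := by
  by_contra hnone
  have hnotMem (b : B) : (a, b) ∉ S := fun h => hnone (exists_isFavourite_of_mem h)
  have hsuitor (b : B) : ∃ a', IsFavourite prefA S a' b := by
    rcases unattractive_iff.1 (not_imp_comm.1 (hS a b).2 (hnotMem b)) with
      ⟨b', -, hfav⟩ | ⟨a', -, hfav⟩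
    · exact absurd hfav.1 (hnotMem b')
    · exact ⟨a', hfav⟩
  choose suitor hsuitor using hsuitor
  have hinj : Function.Injective suitor := fun b b' heq =>
    (hsuitor b).unique (heq ▸ hsuitor b')
  obtain ⟨b, rfl⟩ := (hinj.bijective_of_nat_card_le hcard).surjective a
  exact hnone ⟨b, hsuitor b⟩

theorem eq_of_isFavourite [∀ b, Std.Trichotomous (prefB b)] (hS : IsNormalSet prefA prefB S)
    {a' : A} (h : IsFavourite prefA S a b) (h' : IsFavourite prefA S a' b) : a = a' := by
  have hnot {x y : A} (hx : IsFavourite prefA S x b) (hy : IsFavourite prefA S y b) :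
      ¬ prefB b x y := fun hxy =>
    (hS y b).1 hy.1 (unattractive_iff.2 (Or.inr ⟨x, hxy, hx⟩))
  exact ((trichotomous_of (prefB b) a a').resolve_left (hnot h h')).resolve_right (hnot h' h)

theorem exists_equiv_isFavourite [Finite A] [Finite B] [∀ a, IsWellOrder B (prefA a)]
    [∀ b, Std.Trichotomous (prefB b)] (hS : IsNormalSet prefA prefB S)
    (hcard : Nat.card A = Nat.card B) : ∃ μ : A ≃ B, ∀ a, IsFavourite prefA S a (μ a) := by
  choose fav hfav using hS.exists_isFavourite hcard.le
  have hinj : Function.Injective fav := fun a a' heq =>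
    hS.eq_of_isFavourite (hfav a) (heq ▸ hfav a')
  exact ⟨Equiv.ofBijective fav (hinj.bijective_of_nat_card_le hcard.ge), hfav⟩

theorem isStableMatching [∀ a, Std.Asymm (prefA a)] [∀ a, IsTrans B (prefA a)]
    [∀ b, Std.Asymm (prefB b)] (hS : IsNormalSet prefA prefB S) {μ : A ≃ B}
    (hμ : ∀ a, IsFavourite prefA S a (μ a)) : IsStableMatching prefA prefB μ := by
  rintro a b ⟨hab, hba⟩
  have hun : Unattractive prefA prefB S a b :=
    not_imp_comm.1 (hS a b).2 ((hμ a).notMem_of_pref hab)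
  rcases unattractive_iff.1 hun with ⟨b', hpref, hfav⟩ | ⟨a', hpref, hfav⟩
  · exact (hμ a).notMem_of_pref (trans_of (prefA a) hpref hab) hfav.1
  · obtain rfl : μ a' = b := (hμ a').unique hfav
    rw [μ.symm_apply_apply] at hba
    exact asymm_of (prefB (μ a')) hpref hba

theorem snd_eq_of_mutual_favourites (hS : IsNormalSet prefA prefB S) {μ : A ≃ B}
    (hA : ∀ a, IsFavourite prefA S a (μ a))
    (hB : ∀ b, IsFavourite prefB (Prod.swap ⁻¹' S) b (μ.symm b)) {p : A × B} (hp : p ∈ S) :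
    p.2 = μ p.1 := by
  by_contra hne
  have hfav : IsFavourite prefB (Prod.swap ⁻¹' S) (μ p.1) p.1 := by
    simpa only [μ.symm_apply_apply] using hB (μ p.1)
  exact (hS p.1 p.2).1 hp
    (unattractive_iff.2 (Or.inl ⟨μ p.1, (hA p.1).2 p.2 hne hp, hfav⟩))

end IsNormalSet

end

/-- If the normal form contains two distinct pairs sharing a worker or sharing a firm,
then there are at least two distinct stable matchings. -/
theorem two_stable_of_normalForm_share {W F : Type*} [Fintype W] [Fintype F] [Nonempty W]
    (hcard : Fintype.card W = Fintype.card F)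
    (prefW : W → F → F → Prop) (prefF : F → W → W → Prop)
    (hW : ∀ w, IsStrictTotalOrder F (prefW w))
    (hF : ∀ f, IsStrictTotalOrder W (prefF f))
    (p q : W × F)
    (hp : p ∈ NormalForm W F prefW prefF) (hq : q ∈ NormalForm W F prefW prefF)
    (hne : p ≠ q) (hshare : p.1 = q.1 ∨ p.2 = q.2) :
    ∃ μ₁ μ₂ : W ≃ F, IsStableMatching prefW prefF μ₁ ∧
      IsStableMatching prefW prefF μ₂ ∧ μ₁ ≠ μ₂ := by
  have (w : W) : IsWellOrder F (prefW w) := isWellOrder_of_finite _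
  have (f : F) : IsWellOrder W (prefF f) := isWellOrder_of_finite _
  have hS : IsNormalSet prefW prefF (NormalForm W F prefW prefF) := isNormalSet_normalForm
  rw [← Nat.card_eq_fintype_card, ← Nat.card_eq_fintype_card] at hcard
  obtain ⟨μ, hμ⟩ := hS.exists_equiv_isFavourite hcard
  obtain ⟨ν, hν⟩ := hS.swap.exists_equiv_isFavourite hcard.symm
  refine ⟨μ, ν.symm, hS.isStableMatching hμ, (hS.swap.isStableMatching hν).symm, ?_⟩
  rintro rfl
  have hp' : p.2 = ν.symm p.1 := hS.snd_eq_of_mutual_favourites hμ hν hp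
  have hq' : q.2 = ν.symm q.1 := hS.snd_eq_of_mutual_favourites hμ hν hq
  rcases hshare with h | h
  · exact hne (Prod.ext h (by rw [hp', hq', h]))
  · exact hne (Prod.ext (ν.symm.injective (by rw [← hp', ← hq', h])) h)
end
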